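/- Let X and Y be standard Borel spaces and let P and Q be probability measures on X × Y. Denote by P_Y, Q_Y the marginals on Y, and by P(·|y), Q(·|y) the conditional distributions on X given y. Then √(D_JS(P‖Q)) ≤ √( ∫_Y D_JS(P(·|y)‖Q(·|y)) dP_Y(y) + ∫_Y D_JS(P(·|y)‖Q(·|y)) dQ_Y(y) ) + √(D_JS(P_Y‖Q_Y)). -/

import Mathlib

open MeasureTheory ProbabilityTheory
open scoped ENNReal Classical

/-- Kullback–Leibler divergence between two measures, with values in `[0, ∞]`. -/
noncomputable def klDiv {Z : Type*} [MeasurableSpace Z] (μ ν : Measure Z) : ℝ≥0∞ :=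
  if μ ≪ ν ∧ Integrable (llr μ ν) μ then ENNReal.ofReal (∫ z, llr μ ν z ∂μ) else ⊤

/-- Jensen–Shannon divergence: `D_JS(P‖Q) = (1/2)[D_KL(P‖M) + D_KL(Q‖M)]`
where `M = (1/2)(P + Q)`. -/
noncomputable def jsDiv {Z : Type*} [MeasurableSpace Z] (μ ν : Measure Z) : ℝ≥0∞ :=
  (klDiv μ ((2 : ℝ≥0∞)⁻¹ • (μ + ν)) + klDiv ν ((2 : ℝ≥0∞)⁻¹ • (μ + ν))) / 2

/-- On probability measures the definition agrees with Mathlib's. -/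
lemma klDiv_eq_mathlib {Z : Type*} [MeasurableSpace Z] (μ ν : Measure Z)
    [IsProbabilityMeasure μ] [IsProbabilityMeasure ν] :
    klDiv μ ν = InformationTheory.klDiv μ ν := by
  rw [klDiv, InformationTheory.klDiv_def]
  simp

instance isProbabilityMeasure_mid {Z : Type*} [MeasurableSpace Z] (μ ν : Measure Z)
    [IsProbabilityMeasure μ] [IsProbabilityMeasure ν] :
    IsProbabilityMeasure ((2 : ℝ≥0∞)⁻¹ • (μ + ν)) := by
  constructor
  simp only [Measure.smul_apply, Measure.add_apply, measure_univ, smul_eq_mul]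
  rw [one_add_one_eq_two]
  exact ENNReal.inv_mul_cancel (by simp) (by simp)

lemma mid_comm {Z : Type*} [MeasurableSpace Z] (μ ν : Measure Z) :
    (2 : ℝ≥0∞)⁻¹ • (μ + ν) = (2 : ℝ≥0∞)⁻¹ • (ν + μ) := by
  rw [add_comm]

lemma ac_mid {Z : Type*} [MeasurableSpace Z] (μ ν : Measure Z) :
    μ ≪ (2 : ℝ≥0∞)⁻¹ • (μ + ν) := by
  have h : μ ≪ μ + ν := Measure.absolutelyContinuous_of_le (Measure.le_add_right le_rfl)
  exact h.trans (Measure.absolutelyContinuous_smul (by simp))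

lemma rnDeriv_mid_le {Z : Type*} [MeasurableSpace Z] (μ ν : Measure Z)
    [IsProbabilityMeasure μ] [IsProbabilityMeasure ν] :
    ∀ᵐ z ∂((2 : ℝ≥0∞)⁻¹ • (μ + ν)), μ.rnDeriv ((2 : ℝ≥0∞)⁻¹ • (μ + ν)) z ≤ 2 := by
  refine ae_le_of_forall_setLIntegral_le_of_sigmaFinite (μ.measurable_rnDeriv _) fun s _ _ ↦ ?_
  refine (Measure.setLIntegral_rnDeriv_le s).trans ?_
  rw [setLIntegral_const, Measure.smul_apply, smul_eq_mul, ← mul_assoc,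
    ENNReal.mul_inv_cancel (by simp) (by simp), one_mul, Measure.add_apply]
  exact le_self_add

lemma klDiv_mid_le_one {Z : Type*} [MeasurableSpace Z] (μ ν : Measure Z)
    [IsProbabilityMeasure μ] [IsProbabilityMeasure ν] :
    InformationTheory.klDiv μ ((2 : ℝ≥0∞)⁻¹ • (μ + ν)) ≤ 1 := by
  rw [InformationTheory.klDiv_eq_lintegral_klFun_of_ac (ac_mid μ ν)]
  calc _ ≤ ∫⁻ _, 1 ∂((2 : ℝ≥0∞)⁻¹ • (μ + ν)) := by
        refine lintegral_mono_ae ?_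
        filter_upwards [rnDeriv_mid_le μ ν] with z hz
        rw [ENNReal.ofReal_le_one]
        set t := (μ.rnDeriv ((2 : ℝ≥0∞)⁻¹ • (μ + ν)) z).toReal with ht
        have ht0 : 0 ≤ t := ENNReal.toReal_nonneg
        have ht2 : t ≤ 2 := by
          have := ENNReal.toReal_mono (by simp) hz
          rwa [← ht, ENNReal.toReal_ofNat] at this
        rw [InformationTheory.klFun_apply]
        rcases ht0.eq_or_lt with h | h
        · simp [← h]
        · have := Real.log_le_sub_one_of_pos h
          nlinarith
    _ = 1 := by rw [lintegral_const, measure_univ, one_mul]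

lemma jsDiv_le_one {Z : Type*} [MeasurableSpace Z] (μ ν : Measure Z)
    [IsProbabilityMeasure μ] [IsProbabilityMeasure ν] : jsDiv μ ν ≤ 1 := by
  rw [jsDiv, klDiv_eq_mathlib, klDiv_eq_mathlib]
  refine ENNReal.div_le_of_le_mul ?_
  have h : InformationTheory.klDiv ν ((2 : ℝ≥0∞)⁻¹ • (μ + ν)) ≤ 1 := by
    rw [mid_comm]
    exact klDiv_mid_le_one ν μ
  refine (add_le_add (klDiv_mid_le_one μ ν) h).trans (le_of_eq ?_)
  rw [one_mul, one_add_one_eq_two]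

/-- The midpoint minimizes the sum of the divergences. -/
lemma klDiv_mid_add_le {Z : Type*} [MeasurableSpace Z] (μ ν ρ : Measure Z)
    [IsProbabilityMeasure μ] [IsProbabilityMeasure ν] [IsProbabilityMeasure ρ] :
    InformationTheory.klDiv μ ((2 : ℝ≥0∞)⁻¹ • (μ + ν))
      + InformationTheory.klDiv ν ((2 : ℝ≥0∞)⁻¹ • (μ + ν)) ≤
    InformationTheory.klDiv μ ρ + InformationTheory.klDiv ν ρ := by
  by_cases h1 : InformationTheory.klDiv μ ρ = ∞
  · simp [h1]
  by_cases h2 : InformationTheory.klDiv ν ρ = ∞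
  · simp [h2]
  have h3 : InformationTheory.klDiv μ ((2 : ℝ≥0∞)⁻¹ • (μ + ν)) ≠ ∞ :=
    ((klDiv_mid_le_one μ ν).trans_lt (by simp)).ne
  have h4 : InformationTheory.klDiv ν ((2 : ℝ≥0∞)⁻¹ • (μ + ν)) ≠ ∞ := by
    rw [mid_comm]
    exact ((klDiv_mid_le_one ν μ).trans_lt (by simp)).ne
  have hμm := ac_mid μ ν
  have hνm : ν ≪ (2 : ℝ≥0∞)⁻¹ • (μ + ν) := by
    rw [mid_comm]
    exact ac_mid ν μ
  rw [← ENNReal.toReal_le_toReal (ENNReal.add_ne_top.2 ⟨h3, h4⟩) (ENNReal.add_ne_top.2 ⟨h1, h2⟩),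
    ENNReal.toReal_add h3 h4, ENNReal.toReal_add h1 h2]
  rw [← ne_eq, InformationTheory.klDiv_ne_top_iff] at h1 h2
  rw [InformationTheory.klDiv_ne_top_iff] at h3 h4
  rw [InformationTheory.toReal_klDiv_of_measure_eq h1.1 (by simp),
    InformationTheory.toReal_klDiv_of_measure_eq h2.1 (by simp),
    InformationTheory.toReal_klDiv_of_measure_eq h3.1 (by simp only [measure_univ]),
    InformationTheory.toReal_klDiv_of_measure_eq h4.1 (by simp only [measure_univ])]
  have hmρ : (2 : ℝ≥0∞)⁻¹ • (μ + ν) ≪ ρ := by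
    refine Measure.AbsolutelyContinuous.smul_left ?_ _
    exact Measure.AbsolutelyContinuous.add_left h1.1 h2.1
  have : IsProbabilityMeasure ((2 : ℝ≥0∞)⁻¹ • (μ + ν)) := inferInstance
  generalize hm : (2 : ℝ≥0∞)⁻¹ • (μ + ν) = m at *
  have key : ∀ (τ : Measure Z) [IsProbabilityMeasure τ], τ ≪ m →
      ∀ᵐ z ∂τ, llr τ ρ z = llr τ m z + llr m ρ z := by
    intro τ _ hτ
    have hτρ := hτ.trans hmρ
    filter_upwards [hτρ.ae_le (Measure.rnDeriv_mul_rnDeriv (κ := ρ) hτ),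
      Measure.rnDeriv_pos hτ, hτ.ae_le (Measure.rnDeriv_lt_top τ m),
      hτ.ae_le (Measure.rnDeriv_pos hmρ), hτρ.ae_le (Measure.rnDeriv_lt_top m ρ)]
      with z hz a1 a2 a3 a4
    rw [llr, llr, llr, ← hz, Pi.mul_apply, ENNReal.toReal_mul, Real.log_mul]
    · exact (ENNReal.toReal_pos a1.ne' a2.ne).ne'
    · exact (ENNReal.toReal_pos a3.ne' a4.ne).ne'
  have k1 := key μ hμm
  have k2 := key ν hνm
  have i1 : Integrable (llr m ρ) μ := by
    refine (h1.2.sub h3.2).congr ?_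
    filter_upwards [k1] with z hz
    simp [hz]
  have i2 : Integrable (llr m ρ) ν := by
    refine (h2.2.sub h4.2).congr ?_
    filter_upwards [k2] with z hz
    simp [hz]
  have im : Integrable (llr m ρ) m := by
    have h := Integrable.smul_measure (i1.add_measure i2) (c := (2 : ℝ≥0∞)⁻¹) (by simp)
    rwa [hm] at h
  have hnn := InformationTheory.integral_llr_add_sub_measure_univ_nonneg hmρ im
  simp only [probReal_univ, add_sub_cancel_right] at hnn
  have hsum : ∫ z, llr m ρ z ∂m = 2⁻¹ * (∫ z, llr m ρ z ∂μ + ∫ z, llr m ρ z ∂ν) := by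
    have h := integral_smul_measure (μ := μ + ν) (llr m ρ) (2 : ℝ≥0∞)⁻¹
    rw [hm, integral_add_measure i1 i2] at h
    simpa using h
  rw [integral_congr_ae k1, integral_congr_ae k2, integral_add h3.2 i1, integral_add h4.2 i2]
  linarith

/-- Integral form of the conditional divergence. -/
lemma klDiv_compProd_eq_lintegral {X Y : Type*} [MeasurableSpace X] [MeasurableSpace Y]
    [StandardBorelSpace X] (μ : Measure Y) [IsProbabilityMeasure μ]
    (κ η : Kernel Y X) [IsMarkovKernel κ] [IsMarkovKernel η] (h : ∀ y, κ y ≪ η y) :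
    InformationTheory.klDiv (μ ⊗ₘ κ) (μ ⊗ₘ η) = ∫⁻ y, InformationTheory.klDiv (κ y) (η y) ∂μ := by
  have hac : μ ⊗ₘ κ ≪ μ ⊗ₘ η := Measure.AbsolutelyContinuous.compProd_right (ae_of_all _ h)
  have hmeas : Measurable (fun p : Y × X ↦ Kernel.rnDeriv κ η p.1 p.2) :=
    Kernel.measurable_rnDeriv κ η
  have hwd : μ ⊗ₘ κ = (μ ⊗ₘ η).withDensity (fun p ↦ Kernel.rnDeriv κ η p.1 p.2) := by
    ext s hs
    rw [Measure.compProd_apply hs, withDensity_apply _ hs, ← lintegral_indicator hs,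
      Measure.lintegral_compProd (hmeas.indicator hs)]
    refine lintegral_congr fun y ↦ ?_
    have hs' : MeasurableSet (Prod.mk y ⁻¹' s) := measurable_prodMk_left hs
    rw [← Measure.setLIntegral_rnDeriv (h y), ← lintegral_indicator hs']
    refine lintegral_congr_ae ?_
    filter_upwards [Kernel.rnDeriv_eq_rnDeriv_measure (κ := κ) (η := η) (a := y)] with x hx
    simp only [Set.indicator, Set.mem_preimage, hx]
  have hrn : (μ ⊗ₘ κ).rnDeriv (μ ⊗ₘ η) =ᵐ[μ ⊗ₘ η] fun p ↦ Kernel.rnDeriv κ η p.1 p.2 := by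
    rw [hwd]
    exact Measure.rnDeriv_withDensity _ hmeas
  rw [InformationTheory.klDiv_eq_lintegral_klFun_of_ac hac]
  calc _ = ∫⁻ p, ENNReal.ofReal (InformationTheory.klFun (Kernel.rnDeriv κ η p.1 p.2).toReal)
          ∂(μ ⊗ₘ η) := by
        refine lintegral_congr_ae ?_
        filter_upwards [hrn] with p hp
        rw [hp]
    _ = _ := by
        rw [Measure.lintegral_compProd (by fun_prop)]
        refine lintegral_congr fun y ↦ ?_
        rw [InformationTheory.klDiv_eq_lintegral_klFun_of_ac (h y)]
        refine lintegral_congr_ae ?_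
        filter_upwards [Kernel.rnDeriv_eq_rnDeriv_measure (κ := κ) (η := η) (a := y)] with x hx
        rw [hx]

/-- The pointwise midpoint of two kernels. -/
noncomputable def midKernel {X Y : Type*} [MeasurableSpace X] [MeasurableSpace Y]
    (κ η : Kernel Y X) : Kernel Y X where
  toFun y := (2 : ℝ≥0∞)⁻¹ • (κ y + η y)
  measurable' := by
    refine Measure.measurable_of_measurable_coe _ fun s hs ↦ ?_
    simp only [Measure.smul_apply, Measure.add_apply, smul_eq_mul]
    exact ((κ.measurable_coe hs).add (η.measurable_coe hs)).const_mul _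

lemma midKernel_apply {X Y : Type*} [MeasurableSpace X] [MeasurableSpace Y]
    (κ η : Kernel Y X) (y : Y) : midKernel κ η y = (2 : ℝ≥0∞)⁻¹ • (κ y + η y) := rfl

instance isMarkovKernel_midKernel {X Y : Type*} [MeasurableSpace X] [MeasurableSpace Y]
    (κ η : Kernel Y X) [IsMarkovKernel κ] [IsMarkovKernel η] : IsMarkovKernel (midKernel κ η) :=
  ⟨fun y ↦ by rw [midKernel_apply]; infer_instance⟩

lemma map_swap_eq {X Y : Type*} [MeasurableSpace X] [MeasurableSpace Y]
    (P : Measure (X × Y)) [IsProbabilityMeasure P] (κ : Kernel Y X) [IsMarkovKernel κ]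
    (hκ : ∀ (A : Set X) (B : Set Y), MeasurableSet A → MeasurableSet B →
      P (A ×ˢ B) = ∫⁻ y in B, κ y A ∂(P.map Prod.snd)) :
    P = ((P.map Prod.snd) ⊗ₘ κ).map Prod.swap := by
  have : IsProbabilityMeasure (P.map Prod.snd) :=
    Measure.isProbabilityMeasure_map measurable_snd.aemeasurable
  refine Measure.ext_prod fun {A B} hA hB ↦ ?_
  rw [Measure.map_apply measurable_swap (hA.prod hB), Set.preimage_swap_prod,
    Measure.compProd_apply_prod hB hA, hκ A B hA hB]

lemma klDiv_mid_le_two_jsDiv {Z : Type*} [MeasurableSpace Z] (μ ν : Measure Z)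
    [IsProbabilityMeasure μ] [IsProbabilityMeasure ν] :
    InformationTheory.klDiv μ ((2 : ℝ≥0∞)⁻¹ • (μ + ν)) / 2
      + InformationTheory.klDiv ν ((2 : ℝ≥0∞)⁻¹ • (μ + ν)) / 2 = jsDiv μ ν := by
  rw [jsDiv, klDiv_eq_mathlib, klDiv_eq_mathlib, ENNReal.add_div]

/-- Jensen–Shannon decomposition bound. -/
lemma jsDiv_le_add {X Y : Type*} [MeasurableSpace X] [MeasurableSpace Y]
    [StandardBorelSpace X]
    (P Q : Measure (X × Y)) [IsProbabilityMeasure P] [IsProbabilityMeasure Q]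
    (κP κQ : Kernel Y X) [IsMarkovKernel κP] [IsMarkovKernel κQ]
    (hP : P = ((P.map Prod.snd) ⊗ₘ κP).map Prod.swap)
    (hQ : Q = ((Q.map Prod.snd) ⊗ₘ κQ).map Prod.swap) :
    jsDiv P Q ≤ (∫⁻ y, jsDiv (κP y) (κQ y) ∂(P.map Prod.snd)
          + ∫⁻ y, jsDiv (κP y) (κQ y) ∂(Q.map Prod.snd))
        + jsDiv (P.map Prod.snd) (Q.map Prod.snd) := by
  have iP : IsProbabilityMeasure (P.map Prod.snd) :=
    Measure.isProbabilityMeasure_map measurable_snd.aemeasurable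
  have iQ : IsProbabilityMeasure (Q.map Prod.snd) :=
    Measure.isProbabilityMeasure_map measurable_snd.aemeasurable
  set p := P.map Prod.snd
  set q := Q.map Prod.snd
  set m := (2 : ℝ≥0∞)⁻¹ • (p + q) with hm
  have im : IsProbabilityMeasure m := isProbabilityMeasure_mid p q
  let η := midKernel κP κQ
  let R : Measure (X × Y) := (m ⊗ₘ η).map Prod.swap
  have iR : IsProbabilityMeasure R :=
    Measure.isProbabilityMeasure_map measurable_swap.aemeasurable
  have e1 : InformationTheory.klDiv P R ≤ InformationTheory.klDiv p m
      + ∫⁻ y, 2 * jsDiv (κP y) (κQ y) ∂p := by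
    calc _ = InformationTheory.klDiv ((p ⊗ₘ κP).map Prod.swap) R := by rw [← hP]
      _ ≤ InformationTheory.klDiv (p ⊗ₘ κP) (m ⊗ₘ η) :=
        InformationTheory.klDiv_map_le _ _ measurable_swap
      _ ≤ _ := by
        rw [InformationTheory.klDiv_compProd_eq_add, klDiv_compProd_eq_lintegral p κP η
          (fun y ↦ ac_mid _ _)]
        gcongr with y
        rw [← klDiv_mid_le_two_jsDiv, mul_add, ENNReal.mul_div_cancel (by simp) (by simp)]
        exact le_self_add
  have e2 : InformationTheory.klDiv Q R ≤ InformationTheory.klDiv q m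
      + ∫⁻ y, 2 * jsDiv (κP y) (κQ y) ∂q := by
    calc _ = InformationTheory.klDiv ((q ⊗ₘ κQ).map Prod.swap) R := by rw [← hQ]
      _ ≤ InformationTheory.klDiv (q ⊗ₘ κQ) (m ⊗ₘ η) :=
        InformationTheory.klDiv_map_le _ _ measurable_swap
      _ ≤ _ := by
        rw [InformationTheory.klDiv_compProd_eq_add, klDiv_compProd_eq_lintegral q κQ η
          (fun y ↦ by rw [midKernel_apply, mid_comm]; exact ac_mid _ _)]
        gcongr with y
        rw [← klDiv_mid_le_two_jsDiv, mul_add, ENNReal.mul_div_cancel (by simp) (by simp),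
          ENNReal.mul_div_cancel (by simp) (by simp)]
        exact le_add_self
  rw [lintegral_const_mul' _ _ (by simp)] at e1 e2
  rw [← klDiv_mid_le_two_jsDiv p q, ← hm]
  rw [jsDiv, klDiv_eq_mathlib, klDiv_eq_mathlib]
  refine ENNReal.div_le_of_le_mul ?_
  refine (klDiv_mid_add_le P Q R).trans ((add_le_add e1 e2).trans (le_of_eq ?_))
  rw [add_mul, add_mul, add_mul, ENNReal.div_mul_cancel (by simp) (by simp),
    ENNReal.div_mul_cancel (by simp) (by simp)]
  ring

theorem sqrt_jsDiv_le
    {X Y : Type*} [MeasurableSpace X] [MeasurableSpace Y]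
    [StandardBorelSpace X] [StandardBorelSpace Y]
    (P Q : Measure (X × Y)) [IsProbabilityMeasure P] [IsProbabilityMeasure Q]
    (κP κQ : Kernel Y X) [IsMarkovKernel κP] [IsMarkovKernel κQ]
    (hκP : ∀ (A : Set X) (B : Set Y), MeasurableSet A → MeasurableSet B →
      P (A ×ˢ B) = ∫⁻ y in B, κP y A ∂(P.map Prod.snd))
    (hκQ : ∀ (A : Set X) (B : Set Y), MeasurableSet A → MeasurableSet B →
      Q (A ×ˢ B) = ∫⁻ y in B, κQ y A ∂(Q.map Prod.snd)) :
    Real.sqrt (jsDiv P Q).toReal ≤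
      Real.sqrt ((∫⁻ y, jsDiv (κP y) (κQ y) ∂(P.map Prod.snd)
          + ∫⁻ y, jsDiv (κP y) (κQ y) ∂(Q.map Prod.snd)).toReal)
        + Real.sqrt (jsDiv (P.map Prod.snd) (Q.map Prod.snd)).toReal := by
  have iP : IsProbabilityMeasure (P.map Prod.snd) :=
    Measure.isProbabilityMeasure_map measurable_snd.aemeasurable
  have iQ : IsProbabilityMeasure (Q.map Prod.snd) :=
    Measure.isProbabilityMeasure_map measurable_snd.aemeasurable
  have hmain := jsDiv_le_add P Q κP κQ (map_swap_eq P κP hκP) (map_swap_eq Q κQ hκQ)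
  have hfin : ∀ (μ : Measure Y) [IsProbabilityMeasure μ],
      ∫⁻ y, jsDiv (κP y) (κQ y) ∂μ ≠ ∞ := by
    intro μ _
    refine ((lintegral_mono fun y ↦ jsDiv_le_one (κP y) (κQ y)).trans_lt ?_).ne
    simp
  have h1 : ∫⁻ y, jsDiv (κP y) (κQ y) ∂(P.map Prod.snd)
      + ∫⁻ y, jsDiv (κP y) (κQ y) ∂(Q.map Prod.snd) ≠ ∞ :=
    ENNReal.add_ne_top.2 ⟨hfin _, hfin _⟩
  have h2 : jsDiv (P.map Prod.snd) (Q.map Prod.snd) ≠ ∞ :=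
    ((jsDiv_le_one _ _).trans_lt (by simp)).ne
  have h3 := ENNReal.toReal_mono (ENNReal.add_ne_top.2 ⟨h1, h2⟩) hmain
  rw [ENNReal.toReal_add h1 h2] at h3
  refine (Real.sqrt_le_sqrt h3).trans ?_
  have hx := Real.sq_sqrt (x := (∫⁻ y, jsDiv (κP y) (κQ y) ∂(P.map Prod.snd)
      + ∫⁻ y, jsDiv (κP y) (κQ y) ∂(Q.map Prod.snd)).toReal) ENNReal.toReal_nonneg
  have hy := Real.sq_sqrt (x := (jsDiv (P.map Prod.snd) (Q.map Prod.snd)).toReal)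
    ENNReal.toReal_nonneg
  refine Real.sqrt_le_iff.2 ⟨by positivity, ?_⟩
  rw [add_sq, hx, hy]
  have := mul_nonneg (Real.sqrt_nonneg (∫⁻ y, jsDiv (κP y) (κQ y) ∂(P.map Prod.snd)
      + ∫⁻ y, jsDiv (κP y) (κQ y) ∂(Q.map Prod.snd)).toReal)
    (Real.sqrt_nonneg (jsDiv (P.map Prod.snd) (Q.map Prod.snd)).toReal)
  linarith
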